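/- For every positive integer n: (i) Binary(q_n) holds and Leaves(q_n) = n, i.e. q_n is the Matula number of the n-leaf binary caterpillar F_n; and (ii) for every positive integer m with Topological(m) and Leaves(m) = n, one has m ≤ q_n. In other words, among all topological trees with n leaves, the binary caterpillar F_n has the greatest Matula number, and M(F_n) = q_n. -/

import Mathlib

/-- `nthPrime m` is the `m`-th prime number in ascending order (1-indexed):
`nthPrime 1 = 2`, `nthPrime 2 = 3`, `nthPrime 3 = 5`, `nthPrime 4 = 7`, ... -/
noncomputable def nthPrime (m : ℕ) : ℕ := Nat.nth Nat.Prime (m - 1)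

/-- `MatulaTopological n` says that `n` is the Matula number of a topological tree
(a rooted tree with no vertex of outdegree 1): `MatulaTopological 1` holds, and for
`n > 1`, `MatulaTopological n` holds iff `n` has at least two prime factors counted
with multiplicity and `MatulaTopological m` holds for every positive `m` such that the
prime `nthPrime m` divides `n`.  (Since `nthPrime m ∣ n` forces `m < n`, this
recursion is well-founded, so the inductive predicate is its unique fixed point.) -/
inductive MatulaTopological : ℕ → Prop
  | one : MatulaTopological 1
  | node (n : ℕ) (hn : 1 < n) (hbranches : 2 ≤ n.primeFactorsList.length)
      (hrec : ∀ m : ℕ, 1 ≤ m → nthPrime m ∣ n → MatulaTopological m) :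
      MatulaTopological n

/-- `MatulaBinary n` says that `n` is the Matula number of a binary tree (every vertex
has outdegree 0 or 2): `MatulaBinary 1` holds, and for `n > 1`, `MatulaBinary n` holds
iff `n = nthPrime a * nthPrime b` for some positive `a`, `b` with `MatulaBinary a`
and `MatulaBinary b`. -/
inductive MatulaBinary : ℕ → Prop
  | one : MatulaBinary 1
  | node (a b : ℕ) (ha : 1 ≤ a) (hb : 1 ≤ b)
      (hA : MatulaBinary a) (hB : MatulaBinary b) :
      MatulaBinary (nthPrime a * nthPrime b)

lemma count_prime_add_two_le (t : ℕ) (ht : 2 ≤ t) : Nat.count Nat.Prime t + 2 ≤ t := by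
  induction t, ht using Nat.le_induction with
  | base =>
      simp [Nat.count_succ, Nat.count_zero]
      exact ⟨Nat.not_prime_zero, Nat.not_prime_one⟩
  | succ n hn ih =>
      have : Nat.count Nat.Prime (n + 1) ≤ Nat.count Nat.Prime n + 1 := by
        rw [Nat.count_succ]; split <;> omega
      omega

/-- `matulaLeaves n` is the number of leaves of the rooted tree with Matula number `n`:
`matulaLeaves 1 = 1`, and if `n > 1` has multiset of prime factors
`nthPrime m₁, …, nthPrime m_r` (counted with multiplicity), then
`matulaLeaves n = matulaLeaves m₁ + ⋯ + matulaLeaves m_r`.  Here the 1-indexed prime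
index of a prime factor `t` is recovered as `Nat.count Nat.Prime t + 1`, since
`nthPrime (Nat.count Nat.Prime t + 1) = Nat.nth Nat.Prime (Nat.count Nat.Prime t) = t`
for prime `t`. -/
def matulaLeaves (n : ℕ) : ℕ :=
  if n ≤ 1 then 1
  else (n.primeFactorsList.attach.map
    (fun t => matulaLeaves (Nat.count Nat.Prime t.1 + 1))).sum
decreasing_by
  rename_i hn
  have hmem := t.2
  have hp : (t : ℕ).Prime := Nat.prime_of_mem_primeFactorsList hmem
  have hdvd : (t : ℕ) ∣ n := Nat.dvd_of_mem_primeFactorsList hmem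
  have hle : (t : ℕ) ≤ n := Nat.le_of_dvd (by omega) hdvd
  have := count_prime_add_two_le t.1 hp.two_le
  omega

/-- The sequence `(q_k)_{k ≥ 1}` with `q 1 = 1` and `q k = 2 * nthPrime (q (k-1))` for
`k > 1` (the value `q 0 = 1` is junk); `q n` is the Matula number of the `n`-leaf binary
caterpillar `F_n`, since `M(F_1) = 1` and `M(F_k) = p_1 · p_{M(F_{k-1})} = 2 · p_{M(F_{k-1})}`. -/
noncomputable def q : ℕ → ℕ
  | 0 => 1
  | 1 => 1
  | (k+2) => 2 * nthPrime (q (k+1))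

/-!
Let `c k = nthPrime (q k)`, so that `q (k + 1) = 2 * c k`. A tree with at least two branches, having
`a₁, …, a_r` leaves, has Matula number at most `c a₁ ⋯ c a_r` by induction, so everything rests on
the inequality `c a * c b ≤ q (a + b)`. For `b ≤ a` it is proved by induction on `b`: if it holds
for `b` but fails for `b + 1`, then `c (a + b) ≤ c a * c (b + 1) / 2`, and counting the primes up to
both sides gives `c a * c b ≤ π (c a * c (b + 1) / 2)`. This contradicts
`2 * π (P * c b / 2) < P * q b`, valid for `b ≥ 2` and `P ≥ c b`.

With `y = c b` and `q b = π y`, that last estimate follows heuristically from `π y ~ y / log y` and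
`log (P * y) ≥ 2 * log y`, with a factor of about `2` to spare. Chebyshev's lower bound
`π y * log y ≥ (log 2 - ε) * y` therefore leaves room for an upper bound `θ x ≤ C * x` with any
constant `C < 2 * log 2`. Mathlib's `θ x ≤ log 4 * x` just misses; the prime factors of
`(6 * n)! / ((3 * n)! * (2 * n)! * n!) ≤ 432 ^ n` yield `C = 1.25`, and Abel summation turns this
into a bound for `π`. With the explicit values of `c b` and `q b`, sieving modulo `2` and `30`
settles `b = 2, 3`, and a linear bound `π m ≤ 0.128 * m + 806` settles `b = 4, 5`.
-/

open scoped Nat.Prime Chebyshev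

theorem prime_nthPrime (m : ℕ) : (nthPrime m).Prime :=
  Nat.prime_nth_prime _

theorem monotone_nthPrime : Monotone nthPrime := fun _ _ h ↦
  Nat.nth_monotone Nat.infinite_setOfPred_prime (Nat.sub_le_sub_right h 1)

theorem lt_nthPrime (m : ℕ) : m < nthPrime m := by
  have := Nat.add_two_le_nth_prime (m - 1)
  unfold nthPrime
  omega

theorem nthPrime_one : nthPrime 1 = 2 :=
  Nat.nth_prime_zero_eq_two

theorem nthPrime_count_add_one {p : ℕ} (hp : p.Prime) :
    nthPrime (Nat.count Nat.Prime p + 1) = p :=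
  Nat.nth_count hp

theorem count_nthPrime_add_one {m : ℕ} (hm : 1 ≤ m) :
    Nat.count Nat.Prime (nthPrime m) + 1 = m := by
  have := Nat.primeCounting'_nth_eq (m - 1)
  unfold Nat.primeCounting' at this
  unfold nthPrime
  omega

theorem primeCounting_nthPrime {m : ℕ} (hm : 1 ≤ m) : π (nthPrime m) = m := by
  rw [Nat.primeCounting, Nat.primeCounting', Nat.count_succ, if_pos (prime_nthPrime m),
    count_nthPrime_add_one hm]

theorem primeCounting_le_add_totient_mul {a : ℕ} (ha : a ≠ 0) (m : ℕ) :
    π m ≤ π a + a.totient * (m / a) := by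
  rcases le_total m a with hma | ham
  · exact (Nat.monotone_primeCounting hma).trans (Nat.le_add_right _ _)
  · obtain ⟨n, rfl⟩ := Nat.exists_eq_add_of_le ham
    rw [Nat.add_div_left n ha.bot_lt]
    exact Nat.primeCounting_add_le ha le_rfl n

theorem primeCounting_le_half (m : ℕ) : π m ≤ 1 + m / 2 := by
  have hpi : π 2 = 1 := by decide +kernel
  simpa [hpi] using primeCounting_le_add_totient_mul two_ne_zero m

theorem primeCounting_le_ten_add (m : ℕ) : π m ≤ 10 + 8 * (m / 30) := by
  have hpi : π 30 = 10 := by decide +kernel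
  have hphi : Nat.totient 30 = 8 := by decide +kernel
  simpa [hpi, hphi] using primeCounting_le_add_totient_mul (a := 30) (by norm_num) m

/-! ### Prime counts by trial division -/

theorem prime_iff_coprime_primorial {k n : ℕ} (hk : k < n) (hn : n < (k + 1) ^ 2) (h1 : n ≠ 1) :
    n.Prime ↔ n.Coprime (primorial k) := by
  refine ⟨fun hp ↦ hp.coprime_iff_not_dvd.2 fun hdvd ↦ ?_, fun hcop ↦ ?_⟩
  · exact hk.not_ge (hp.dvd_primorial_iff.1 hdvd)
  · by_contra hnp
    have hsq : n.minFac ^ 2 < (k + 1) ^ 2 :=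
      (Nat.minFac_sq_le_self (Nat.zero_lt_of_lt hk) hnp).trans_lt hn
    have hle : n.minFac ≤ k := Nat.lt_succ_iff.1 (lt_of_pow_lt_pow_left₀ 2 (Nat.zero_le _) hsq)
    have hmin := Nat.minFac_prime h1
    exact hmin.not_dvd_one <| hcop ▸
      Nat.dvd_gcd n.minFac_dvd (hmin.dvd_primorial_iff.2 hle)

theorem count_prime_eq_add_count_coprime {k s t : ℕ} (hk : 1 ≤ k) (hs : k < s) (hst : s ≤ t)
    (ht : t ≤ (k + 1) ^ 2) :
    Nat.count Nat.Prime t = Nat.count Nat.Prime s +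
      Nat.count (fun i ↦ (s + i).Coprime (primorial k)) (t - s) := by
  obtain ⟨m, rfl⟩ := Nat.exists_eq_add_of_le hst
  rw [Nat.count_add, Nat.add_sub_cancel_left]
  congr 1
  rw [Nat.count_eq_card_filter_range, Nat.count_eq_card_filter_range]
  congr 1
  refine Finset.filter_congr fun i hi ↦ ?_
  have := Finset.mem_range.1 hi
  exact prime_iff_coprime_primorial (by omega) (by omega) (by omega)

theorem count_prime_443 : Nat.count Nat.Prime 443 = 85 := by
  have h83 : Nat.count Nat.Prime 83 = 22 := by decide +kernel
  rw [count_prime_eq_add_count_coprime (k := 82) (s := 83) (by norm_num) (by norm_num)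
    (by norm_num) (by norm_num), h83]
  decide +kernel

theorem count_prime_6883 : Nat.count Nat.Prime 6883 = 885 := by
  -- `82` suffices because `6883 < 83 ^ 2`; the short blocks keep the kernel's recursion shallow.
  have count_add {s t : ℕ} (hs : 82 < s) (hst : s ≤ t) (ht : t ≤ 6889) :=
    count_prime_eq_add_count_coprime (k := 82) (by norm_num) hs hst ht
  rw [count_add (s := 5683) (by norm_num) (by norm_num) (by norm_num),
    count_add (s := 4443) (by norm_num) (by norm_num) (by norm_num),
    count_add (s := 3443) (by norm_num) (by norm_num) (by norm_num),
    count_add (s := 2443) (by norm_num) (by norm_num) (by norm_num),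
    count_add (s := 1443) (by norm_num) (by norm_num) (by norm_num),
    count_add (s := 443) (by norm_num) (by norm_num) (by norm_num), count_prime_443]
  decide +kernel

/-! ### An upper bound for Chebyshev's function -/

theorem dvd_choose_of_mod_lt_mod {p n k : ℕ} (hp : p.Prime) (h : n % p < k % p) :
    p ∣ n.choose k := by
  have : Fact p.Prime := ⟨hp⟩
  have hlucas := Choose.choose_modEq_choose_mod_mul_choose_div_nat (n := n) (k := k) (p := p)
  rw [Nat.choose_eq_zero_of_lt h, zero_mul] at hlucas
  exact Nat.modEq_zero_iff_dvd.1 hlucas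

theorem prime_dvd_choose_mul_choose {n p : ℕ} (hp : p.Prime) (hn : n < p) (hp6 : p ≤ 6 * n) :
    p ∣ (6 * n).choose (3 * n) * (3 * n).choose n := by
  have mod_eq {m r : ℕ} (d : ℕ) (hm : r + p * d = m) (hr : r < p) : m % p = r :=
    ((Nat.div_mod_unique hp.pos).2 ⟨hm, hr⟩).2
  rcases lt_or_ge (3 * n) p with h3 | h3
  · refine Dvd.dvd.mul_right (dvd_choose_of_mod_lt_mod hp ?_) _
    rw [mod_eq (r := 6 * n - p) 1 (by omega) (by omega), Nat.mod_eq_of_lt h3]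
    omega
  rcases lt_or_ge (2 * n) p with h2 | h2
  · refine Dvd.dvd.mul_left (dvd_choose_of_mod_lt_mod hp ?_) _
    rw [mod_eq (r := 3 * n - p) 1 (by omega) (by omega), Nat.mod_eq_of_lt hn]
    omega
  rcases lt_or_ge (3 * n) (2 * p) with h32 | h32
  · refine Dvd.dvd.mul_right (dvd_choose_of_mod_lt_mod hp ?_) _
    rw [mod_eq (r := 6 * n - 3 * p) 3 (by omega) (by omega),
      mod_eq (r := 3 * n - p) 1 (by omega) (by omega)]
    omega
  · refine Dvd.dvd.mul_left (dvd_choose_of_mod_lt_mod hp ?_) _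
    rw [mod_eq (r := 3 * n - 2 * p) 2 (by omega) (by omega), Nat.mod_eq_of_lt hn]
    omega

theorem pow_mul_pow_mul_choose_le_add_pow (a b n k : ℕ) :
    a ^ k * b ^ (n - k) * n.choose k ≤ (a + b) ^ n := by
  rcases lt_or_ge n k with hnk | hkn
  · simp [Nat.choose_eq_zero_of_lt hnk]
  · rw [add_pow]
    exact Finset.single_le_sum (f := fun k ↦ a ^ k * b ^ (n - k) * n.choose k)
      (fun _ _ ↦ Nat.zero_le _) (Finset.mem_range_succ_iff.2 hkn)

theorem choose_mul_choose_le (n : ℕ) :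
    (6 * n).choose (3 * n) * (3 * n).choose n ≤ 432 ^ n := by
  have h6 : (6 * n).choose (3 * n) ≤ 64 ^ n := by
    simpa [pow_mul] using Nat.choose_le_two_pow (6 * n) (3 * n)
  have h3 : 4 ^ n * (3 * n).choose n ≤ 27 ^ n := by
    have := pow_mul_pow_mul_choose_le_add_pow 1 2 (3 * n) n
    rw [show 3 * n - n = 2 * n by omega] at this
    simpa [pow_mul] using this
  refine Nat.le_of_mul_le_mul_left (c := 4 ^ n) ?_ (by positivity)
  calc 4 ^ n * ((6 * n).choose (3 * n) * (3 * n).choose n)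
      = (6 * n).choose (3 * n) * (4 ^ n * (3 * n).choose n) := by ring
    _ ≤ 64 ^ n * 27 ^ n := Nat.mul_le_mul h6 h3
    _ = 4 ^ n * 432 ^ n := by rw [← mul_pow, ← mul_pow]; norm_num

theorem primorial_six_mul_le (n : ℕ) : primorial (6 * n) ≤ primorial n * 432 ^ n := by
  rw [show 6 * n = n + 5 * n by ring, primorial_add]
  refine Nat.mul_le_mul_left _ (le_trans (Nat.le_of_dvd ?_ ?_) (choose_mul_choose_le n))
  · exact Nat.mul_pos (Nat.choose_pos (by omega)) (Nat.choose_pos (by omega))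
  · refine Finset.prod_primes_dvd _ (fun p hp ↦ (Finset.mem_filter.1 hp).2.prime) fun p hp ↦ ?_
    obtain ⟨hmem, hprime⟩ := Finset.mem_filter.1 hp
    rw [Finset.mem_Ico] at hmem
    exact prime_dvd_choose_mul_choose hprime (by omega) (by omega)

theorem theta_six_mul_le (n : ℕ) : θ (6 * n : ℕ) ≤ θ n + n * Real.log 432 := by
  rw [Chebyshev.theta_eq_log_primorial, Chebyshev.theta_eq_log_primorial, Nat.floor_natCast,
    Nat.floor_natCast, ← Real.log_pow,
    ← Real.log_mul (mod_cast primorial_ne_zero n) (by positivity)]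
  exact Real.log_le_log (mod_cast primorial_pos _) (mod_cast primorial_six_mul_le n)

theorem log_432_le : Real.log 432 ≤ 6.1 := by
  rw [Real.log_le_iff_le_exp (by norm_num)]
  calc (432 : ℝ) ≤ 2.7182818283 ^ 6 * (0.1 + 1) := by norm_num
    _ ≤ Real.exp 1 ^ 6 * Real.exp 0.1 := by
      gcongr
      exacts [Real.exp_one_gt_d9.le, Real.add_one_le_exp _]
    _ = Real.exp 6.1 := by rw [← Real.exp_nat_mul, ← Real.exp_add]; norm_num

theorem theta_natCast_le (m : ℕ) : θ m ≤ 1.25 * m + 34 := by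
  induction m using Nat.strong_induction_on with
  | _ m ih =>
    rcases lt_or_ge m 245 with hm | hm
    · have hlog : Real.log 4 ≤ 1.3863 := by
        rw [show (4 : ℝ) = 2 ^ 2 by norm_num, Real.log_pow]
        linarith [Real.log_two_lt_d9]
      have htheta := Chebyshev.theta_le_log4_mul_x m.cast_nonneg
      have hmR : (m : ℝ) ≤ 244 := mod_cast Nat.le_of_lt_succ hm
      nlinarith
    · -- `1.25 + log 432 ≤ 7.35 < 6 * 1.25`, and from `m = 245` on the slack pays for rounding `m`
      -- up to a multiple of `6`.
      obtain ⟨n, hmn, hnm⟩ : ∃ n, m ≤ 6 * n ∧ 6 * n ≤ m + 5 :=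
        ⟨(m + 5) / 6, by omega, by omega⟩
      have hmono : θ m ≤ θ (6 * n : ℕ) := Chebyshev.theta_mono (mod_cast hmn)
      have hstep : n * Real.log 432 ≤ n * 6.1 := by gcongr; exact log_432_le
      have hnmR : 6 * (n : ℝ) ≤ m + 5 := mod_cast hnm
      have hmR : (245 : ℝ) ≤ m := mod_cast hm
      linarith [ih n (by omega), theta_six_mul_le n]

theorem theta_le {x : ℝ} (hx : 0 ≤ x) : θ x ≤ 1.25 * x + 34 := by
  rw [Chebyshev.theta_eq_theta_coe_floor]
  linarith [theta_natCast_le ⌊x⌋₊, Nat.floor_le hx]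

/-! ### Explicit bounds for the prime counting function -/

theorem natCast_le_log_of_pow_le {k : ℕ} {x : ℝ} (h : 2.7182818286 ^ k ≤ x) :
    k ≤ Real.log x := by
  have hx : 0 < x := h.trans_lt' (by positivity)
  rw [Real.le_log_iff_exp_le hx, ← mul_one (k : ℝ), Real.exp_nat_mul]
  exact (pow_le_pow_left₀ (Real.exp_pos 1).le Real.exp_one_lt_d9.le k).trans h

theorem log_le_add_div_two_pow {x : ℝ} (hx : 0 < x) (k : ℕ) :
    Real.log x ≤ k + x / 2 ^ k := by
  have hlog := Real.log_le_sub_one_of_pos (show 0 < x / 2 ^ k by positivity)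
  rw [Real.log_div hx.ne' (by positivity), Real.log_pow] at hlog
  have hk : k * Real.log 2 ≤ k :=
    mul_le_of_le_one_right k.cast_nonneg (Real.log_two_lt_d9.le.trans (by norm_num))
  linarith

theorem hasDerivAt_div_log_sq {x : ℝ} (hx : 1 < x) :
    HasDerivAt (fun x ↦ x / Real.log x ^ 2) ((1 - 2 / Real.log x) / Real.log x ^ 2) x := by
  have hlog : Real.log x ≠ 0 := (Real.log_pos hx).ne'
  have hx0 : x ≠ 0 := (zero_lt_one.trans hx).ne'
  refine ((hasDerivAt_id x).div ((Real.hasDerivAt_log hx0).pow 2)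
    (pow_ne_zero 2 hlog)).congr_deriv ?_
  simp only [id, Pi.pow_apply]
  field_simp
  ring

theorem integral_theta_div_le {a K u t : ℝ} (hu : 2 ≤ u) (hut : u ≤ t) (hK : 0 ≤ K)
    (haK : a ≤ K * (1 - 2 / Real.log u)) (hθ : ∀ x ∈ Set.Icc u t, θ x ≤ a * x) :
    ∫ x in u..t, θ x / (x * Real.log x ^ 2) ≤ K * (t / Real.log t ^ 2) := by
  have hderiv (x : ℝ) (hx : u ≤ x) : HasDerivAt (fun x ↦ K * (x / Real.log x ^ 2))
      (K * ((1 - 2 / Real.log x) / Real.log x ^ 2)) x :=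
    (hasDerivAt_div_log_sq (by linarith)).const_mul K
  have hle (x : ℝ) (hx : x ∈ Set.Ioo u t) : θ x / (x * Real.log x ^ 2) ≤
      K * ((1 - 2 / Real.log x) / Real.log x ^ 2) := by
    have hx0 : 0 < x := by linarith [hx.1]
    have hlogu : 0 < Real.log u := Real.log_pos (by linarith)
    have hlog : Real.log u ≤ Real.log x := Real.log_le_log (by linarith) hx.1.le
    have haKx : a ≤ K * (1 - 2 / Real.log x) := haK.trans (by gcongr)
    calc θ x / (x * Real.log x ^ 2) ≤ K * (1 - 2 / Real.log x) * x / (x * Real.log x ^ 2) := by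
          gcongr
          exact (hθ x ⟨hx.1.le, hx.2.le⟩).trans (by gcongr)
      _ = K * ((1 - 2 / Real.log x) / Real.log x ^ 2) := by
          rw [mul_comm x, mul_div_mul_right _ _ hx0.ne', mul_div_assoc]
  have hint := intervalIntegral.integral_le_sub_of_hasDeriv_right_of_le hut
    (fun x hx ↦ (hderiv x hx.1).continuousAt.continuousWithinAt)
    (fun x hx ↦ (hderiv x hx.1.le).hasDerivWithinAt)
    ((Chebyshev.integrableOn_theta_div_id_mul_log_sq t).mono_set (Set.Icc_subset_Icc_left hu)) hle
  have hnonneg : 0 ≤ K * (u / Real.log u ^ 2) := by positivity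
  linarith

theorem primeCounting_le_of_theta_le {a K u t : ℝ} (hu : 2 ≤ u) (hut : u ≤ t) (hK : 0 ≤ K)
    (haK : a ≤ K * (1 - 2 / Real.log u)) (hθ : ∀ x ∈ Set.Icc u t, θ x ≤ a * x) :
    π ⌊t⌋₊ ≤ π ⌊u⌋₊ + θ t / Real.log t + K * (t / Real.log t ^ 2) := by
  have intervalIntegrable {x y : ℝ} (hx : 2 ≤ x) (hxy : x ≤ y) :
      IntervalIntegrable (fun x ↦ θ x / (x * Real.log x ^ 2)) MeasureTheory.volume x y := by
    rw [intervalIntegrable_iff_integrableOn_Icc_of_le hxy]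
    exact (Chebyshev.integrableOn_theta_div_id_mul_log_sq y).mono_set
      (Set.Icc_subset_Icc_left hx)
  have hpit := Chebyshev.primeCounting_eq_theta_div_log_add_integral (hu.trans hut)
  have hpiu := Chebyshev.primeCounting_eq_theta_div_log_add_integral hu
  rw [← intervalIntegral.integral_add_adjacent_intervals (intervalIntegrable le_rfl hu)
    (intervalIntegrable hu hut)] at hpit
  have hθu : 0 ≤ θ u / Real.log u :=
    div_nonneg (Chebyshev.theta_nonneg _) (Real.log_nonneg (by linarith))
  linarith [integral_theta_div_le hu hut hK haK hθ]

theorem primeCounting_floor_le {t : ℝ} (ht : Real.exp 8 ≤ t) :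
    π ⌊t⌋₊ ≤ (1.25 * t + 34) / Real.log t + 1.7 * (t / Real.log t ^ 2) + 802 := by
  have hexp : Real.exp 8 = Real.exp 1 ^ 8 := by rw [← Real.exp_nat_mul]; norm_num
  have hexp_ge : 2900 ≤ Real.exp 8 := by
    rw [hexp]
    exact le_trans (by norm_num) (pow_le_pow_left₀ (by norm_num) Real.exp_one_gt_d9.le 8)
  have hexp_lt : Real.exp 8 < 2990 := by
    rw [hexp]
    exact (pow_lt_pow_left₀ Real.exp_one_lt_d9 (Real.exp_pos 1).le (by norm_num)).trans
      (by norm_num)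
  have hpi : (π ⌊Real.exp 8⌋₊ : ℝ) ≤ 802 := by
    have hfloor : ⌊Real.exp 8⌋₊ < 2990 :=
      (Nat.floor_lt (Real.exp_pos 8).le).2 (mod_cast hexp_lt)
    have := primeCounting_le_ten_add ⌊Real.exp 8⌋₊
    exact_mod_cast (show π ⌊Real.exp 8⌋₊ ≤ 802 by omega)
  have hmain := primeCounting_le_of_theta_le (a := 1.262) (K := 1.7) (by linarith) ht
    (by norm_num) (by rw [Real.log_exp]; norm_num)
    fun x hx ↦ by linarith [theta_le (x := x) (by linarith [hx.1]), hx.1]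
  have hθ : θ t / Real.log t ≤ (1.25 * t + 34) / Real.log t :=
    div_le_div_of_nonneg_right (theta_le (by linarith)) (Real.log_nonneg (by linarith))
  linarith

theorem mul_primeCounting_le {m : ℕ} (hm : 60000 ≤ m) : 1000 * π m ≤ 128 * m + 806000 := by
  have hmR : (60000 : ℝ) ≤ m := mod_cast hm
  have hlog : 11 ≤ Real.log m := mod_cast natCast_le_log_of_pow_le (k := 11) (by norm_num; linarith)
  have hexp : Real.exp 8 ≤ m :=
    (Real.le_log_iff_exp_le (by linarith)).1 (by linarith)
  have hpi : (π m : ℝ) ≤ (1.25 * m + 34) / 11 + 1.7 * (m / 11 ^ 2) + 802 := by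
    refine (Nat.floor_natCast (R := ℝ) m ▸ primeCounting_floor_le hexp).trans ?_
    gcongr
  exact_mod_cast (show (1000 * π m : ℝ) ≤ 128 * m + 806000 by linarith)

theorem mul_le_primeCounting_mul_log {y : ℕ} (hy : 51500 ≤ y) :
    0.6925 * y ≤ π y * Real.log y := by
  have hyR : (51500 : ℝ) ≤ y := mod_cast hy
  have hpsi := (Chebyshev.psi_ge y).trans (Chebyshev.psi_le_primeCounting_mul_log y)
  have hlog : Real.log (y + 1) ≤ 0.0006 * y := by
    have := log_le_add_div_two_pow (x := y + 1) (by positivity) 14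
    norm_num at this
    linarith
  nlinarith [Real.log_two_gt_d9]

theorem primeCounting_floor_half_mul_log_lt {x : ℝ} (hx : 2650000000 ≤ x) :
    π ⌊x / 2⌋₊ * Real.log x < 0.6925 * x := by
  obtain ⟨t, rfl⟩ : ∃ t, x = t * 2 := ⟨x / 2, by ring⟩
  rw [mul_div_cancel_right₀ _ two_ne_zero]
  have ht : 1325000000 ≤ t := by linarith
  have ht0 : 0 < t := by linarith
  have hL : 21 ≤ Real.log t := mod_cast natCast_le_log_of_pow_le (k := 21) (by norm_num; linarith)
  have hLt : Real.log t ≤ 21 + t / 2 ^ 21 := mod_cast log_le_add_div_two_pow ht0 21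
  have hpi := primeCounting_floor_le ((Real.le_log_iff_exp_le ht0).1 (by linarith : 8 ≤ Real.log t))
  have hlog0 : 0 ≤ Real.log (t * 2) := Real.log_nonneg (by linarith)
  have hlog : Real.log (t * 2) ≤ Real.log t + 0.6932 := by
    rw [Real.log_mul ht0.ne' two_ne_zero]
    linarith [Real.log_two_lt_d9]
  set L := Real.log t
  have : 0 < L := by linarith
  have hremainder : 34 + 802 * L ≤ 0.0005 * t := by linarith
  have hpi' : (π ⌊t⌋₊ : ℝ) ≤ t * (1.2505 * L + 1.7) / L ^ 2 := calc
    (π ⌊t⌋₊ : ℝ) ≤ (1.25 * t + 34) / L + 1.7 * (t / L ^ 2) + 802 := hpi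
    _ = ((1.25 * t + (34 + 802 * L)) * L + 1.7 * t) / L ^ 2 := by field_simp; ring
    _ ≤ ((1.25 * t + 0.0005 * t) * L + 1.7 * t) / L ^ 2 := by gcongr
    _ = t * (1.2505 * L + 1.7) / L ^ 2 := by ring
  have hquadratic : (1.2505 * L + 1.7) * (L + 0.6932) < 1.385 * L ^ 2 := by nlinarith
  calc π ⌊t⌋₊ * Real.log (t * 2) ≤ t * (1.2505 * L + 1.7) / L ^ 2 * (L + 0.6932) := by gcongr
    _ = t * ((1.2505 * L + 1.7) * (L + 0.6932)) / L ^ 2 := by ring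
    _ < t * (1.385 * L ^ 2) / L ^ 2 := by gcongr
    _ = 0.6925 * (t * 2) := by field_simp; norm_num

theorem two_mul_primeCounting_mul_half_lt {y P : ℕ} (hy : 51500 ≤ y) (hyP : y ≤ P) :
    2 * π (P * y / 2) < P * π y := by
  have hyR : (51500 : ℝ) ≤ y := mod_cast hy
  have hPR : (y : ℝ) ≤ P := mod_cast hyP
  have hlogy : 0 < Real.log y := Real.log_pos (by linarith)
  have hlog : 2 * Real.log y ≤ Real.log (P * y) := by
    rw [Real.log_mul (by linarith) (by linarith), two_mul]
    gcongr
  have hupper := primeCounting_floor_half_mul_log_lt (x := P * y) (by nlinarith)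
  rw [← Nat.cast_mul, Nat.floor_div_ofNat, Nat.floor_natCast, Nat.cast_mul] at hupper
  have hlt : 2 * (π (P * y / 2) : ℝ) * Real.log y < P * π y * Real.log y := calc
    2 * (π (P * y / 2) : ℝ) * Real.log y = π (P * y / 2) * (2 * Real.log y) := by ring
    _ ≤ π (P * y / 2) * Real.log (P * y) := by gcongr
    _ < 0.6925 * (P * y) := hupper
    _ = P * (0.6925 * y) := by ring
    _ ≤ P * (π y * Real.log y) := 
      mul_le_mul_of_nonneg_left (mul_le_primeCounting_mul_log hy) P.cast_nonneg
    _ = P * π y * Real.log y := by ring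
  exact_mod_cast lt_of_mul_lt_mul_right hlt hlogy.le

/-! ### Planted caterpillars -/

theorem q_pos : ∀ k : ℕ, 1 ≤ q k
  | 0 | 1 => le_rfl
  | _ + 2 => Nat.mul_pos two_pos (prime_nthPrime _).pos

/-- The Matula number of the caterpillar with `k` leaves planted on a new root, that is, of the
tree whose root has that caterpillar as its only branch. -/
noncomputable def plantedCaterpillar (k : ℕ) : ℕ := nthPrime (q k)

theorem q_succ : ∀ {k : ℕ}, 1 ≤ k → q (k + 1) = 2 * plantedCaterpillar k
  | _ + 1, _ => rfl

theorem primeCounting_plantedCaterpillar (k : ℕ) : π (plantedCaterpillar k) = q k :=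
  primeCounting_nthPrime (q_pos k)

theorem q_lt_plantedCaterpillar (k : ℕ) : q k < plantedCaterpillar k :=
  lt_nthPrime _

theorem plantedCaterpillar_mono {j k : ℕ} (hj : 1 ≤ j) (hjk : j ≤ k) :
    plantedCaterpillar j ≤ plantedCaterpillar k := by
  induction k, hjk using Nat.le_induction with
  | base => rfl
  | succ k hjk ih =>
    have := q_lt_plantedCaterpillar (k + 1)
    rw [q_succ (hj.trans hjk)] at this
    omega

theorem plantedCaterpillar_eq_of_count {k p : ℕ} (hp : p.Prime)
    (hk : q k = Nat.count Nat.Prime p + 1) : plantedCaterpillar k = p := by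
  rw [plantedCaterpillar, hk, nthPrime_count_add_one hp]

theorem plantedCaterpillar_one : plantedCaterpillar 1 = 2 :=
  nthPrime_one

theorem q_two : q 2 = 4 := by
  rw [q_succ le_rfl, plantedCaterpillar_one]

theorem plantedCaterpillar_two : plantedCaterpillar 2 = 7 :=
  plantedCaterpillar_eq_of_count (by norm_num) (by rw [q_two]; decide +kernel)

theorem q_three : q 3 = 14 := by
  rw [q_succ (by norm_num), plantedCaterpillar_two]

theorem plantedCaterpillar_three : plantedCaterpillar 3 = 43 :=
  plantedCaterpillar_eq_of_count (by norm_num) (by rw [q_three]; decide +kernel)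

theorem q_four : q 4 = 86 := by
  rw [q_succ (by norm_num), plantedCaterpillar_three]

theorem plantedCaterpillar_four : plantedCaterpillar 4 = 443 :=
  plantedCaterpillar_eq_of_count (by norm_num) (by rw [q_four, count_prime_443])

theorem q_five : q 5 = 886 := by
  rw [q_succ (by norm_num), plantedCaterpillar_four]

theorem plantedCaterpillar_five : plantedCaterpillar 5 = 6883 :=
  plantedCaterpillar_eq_of_count (by norm_num) (by rw [q_five, count_prime_6883])

theorem le_plantedCaterpillar {k : ℕ} (hk : 6 ≤ k) : 51500 ≤ plantedCaterpillar k := by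
  refine le_trans ?_ (plantedCaterpillar_mono (by norm_num) hk)
  have hpi := primeCounting_le_ten_add (plantedCaterpillar 6)
  rw [primeCounting_plantedCaterpillar, q_succ (by norm_num), plantedCaterpillar_five] at hpi
  omega

theorem two_mul_primeCounting_mul_plantedCaterpillar_half_lt {b P : ℕ} (hb : 2 ≤ b)
    (hP : plantedCaterpillar b ≤ P) : 2 * π (P * plantedCaterpillar b / 2) < P * q b := by
  rcases lt_or_ge b 6 with hb6 | hb6
  · interval_cases b
    · rw [plantedCaterpillar_two] at *
      have := primeCounting_le_half (P * 7 / 2)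
      rw [q_two]
      omega
    · rw [plantedCaterpillar_three] at *
      have := primeCounting_le_ten_add (P * 43 / 2)
      rw [q_three]
      omega
    · rw [plantedCaterpillar_four] at *
      have := mul_primeCounting_le (m := P * 443 / 2) (by omega)
      rw [q_four]
      omega
    · rw [plantedCaterpillar_five] at *
      have := mul_primeCounting_le (m := P * 6883 / 2) (by omega)
      rw [q_five]
      omega
  · rw [← primeCounting_plantedCaterpillar b]
    exact two_mul_primeCounting_mul_half_lt (le_plantedCaterpillar hb6) hP

theorem plantedCaterpillar_mul_le_q {a b : ℕ} (ha : 1 ≤ a) (hb : 1 ≤ b) :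
    plantedCaterpillar a * plantedCaterpillar b ≤ q (a + b) := by
  wlog hba : b ≤ a generalizing a b
  · rw [mul_comm, add_comm]
    exact this hb ha (le_of_not_ge hba)
  induction b, hb using Nat.le_induction with
  | base => rw [q_succ ha, plantedCaterpillar_one, mul_comm]
  | succ b hb ih =>
    rw [← add_assoc, q_succ (by omega)]
    by_contra! hlt
    have hle : plantedCaterpillar (a + b) ≤
        plantedCaterpillar a * plantedCaterpillar (b + 1) / 2 := by omega
    have hq : q (a + b) < q (a + b) := by
      refine Nat.lt_of_mul_lt_mul_left (a := 2) ?_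
      calc 2 * q (a + b) = 2 * π (plantedCaterpillar (a + b)) := by
            rw [primeCounting_plantedCaterpillar]
        _ ≤ 2 * π (plantedCaterpillar a * plantedCaterpillar (b + 1) / 2) :=
            Nat.mul_le_mul_left _ (Nat.monotone_primeCounting hle)
        _ < plantedCaterpillar a * q (b + 1) :=
            two_mul_primeCounting_mul_plantedCaterpillar_half_lt (by omega)
              (plantedCaterpillar_mono (by omega) hba)
        _ = 2 * (plantedCaterpillar a * plantedCaterpillar b) := by rw [q_succ hb]; ring
        _ ≤ 2 * q (a + b) := Nat.mul_le_mul_left _ (ih (by omega))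
    exact hq.false

theorem prod_le_q_sum {f : ℕ → ℕ} (hf : ∀ t, 1 ≤ f t) : ∀ {l : List ℕ}, 2 ≤ l.length →
    (∀ t ∈ l, t ≤ plantedCaterpillar (f t)) → l.prod ≤ q (l.map f).sum
  | [s, t], _, h => by
    simpa using (Nat.mul_le_mul (h s (by simp)) (h t (by simp))).trans
      (plantedCaterpillar_mul_le_q (hf s) (hf t))
  | s :: t :: u :: l, _, h => by
    have hprod : (t :: u :: l).prod ≤ q ((t :: u :: l).map f).sum :=
      prod_le_q_sum hf (by simp) fun x hx ↦ h x (List.mem_cons_of_mem s hx)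
    have hsum : 1 ≤ ((t :: u :: l).map f).sum := (hf t).trans (Nat.le_add_right _ _)
    calc (s :: t :: u :: l).prod
        ≤ plantedCaterpillar (f s) * plantedCaterpillar ((t :: u :: l).map f).sum :=
          Nat.mul_le_mul (h s List.mem_cons_self) (hprod.trans (q_lt_plantedCaterpillar _).le)
      _ ≤ q ((s :: t :: u :: l).map f).sum := plantedCaterpillar_mul_le_q (hf s) hsum

/-! ### Leaves -/

theorem matulaLeaves_one : matulaLeaves 1 = 1 := by
  rw [matulaLeaves, if_pos le_rfl]

theorem matulaLeaves_eq_sum {n : ℕ} (hn : 1 < n) : matulaLeaves n =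
    (n.primeFactorsList.map fun p ↦ matulaLeaves (Nat.count Nat.Prime p + 1)).sum := by
  rw [matulaLeaves, if_neg hn.not_ge]
  exact congrArg List.sum
    (List.attach_map_val (f := fun p ↦ matulaLeaves (Nat.count Nat.Prime p + 1)))

theorem matulaLeaves_pos (n : ℕ) : 1 ≤ matulaLeaves n := by
  induction n using Nat.strong_induction_on with
  | _ n ih =>
    rcases le_or_gt n 1 with hn | hn
    · rw [matulaLeaves, if_pos hn]
    · have hp := Nat.minFac_prime hn.ne'
      have hcount := count_prime_add_two_le _ hp.two_le
      have hle := Nat.minFac_le (Nat.zero_lt_of_lt hn)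
      rw [matulaLeaves_eq_sum hn]
      refine (ih (Nat.count Nat.Prime n.minFac + 1) (by omega)).trans
        (List.single_le_sum (fun _ _ ↦ Nat.zero_le _) _ (List.mem_map.2 ⟨n.minFac, ?_, rfl⟩))
      exact (Nat.mem_primeFactorsList (by omega)).2 ⟨hp, n.minFac_dvd⟩

theorem matulaLeaves_nthPrime_mul_nthPrime {a b : ℕ} (ha : 1 ≤ a) (hb : 1 ≤ b) :
    matulaLeaves (nthPrime a * nthPrime b) = matulaLeaves a + matulaLeaves b := by
  have hpa := prime_nthPrime a
  have hpb := prime_nthPrime b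
  have hperm := Nat.perm_primeFactorsList_mul hpa.ne_zero hpb.ne_zero
  rw [matulaLeaves_eq_sum (hpa.one_lt.trans_le (Nat.le_mul_of_pos_right _ hpb.pos)),
    (hperm.map _).sum_eq, Nat.primeFactorsList_prime hpa, Nat.primeFactorsList_prime hpb]
  simp [count_nthPrime_add_one ha, count_nthPrime_add_one hb]

theorem q_succ_eq_nthPrime_mul_nthPrime {k : ℕ} (hk : 1 ≤ k) :
    q (k + 1) = nthPrime 1 * nthPrime (q k) := by
  rw [q_succ hk, nthPrime_one, plantedCaterpillar]

theorem matulaBinary_q {n : ℕ} (hn : 1 ≤ n) : MatulaBinary (q n) := by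
  induction n, hn using Nat.le_induction with
  | base => exact .one
  | succ n hn ih =>
    rw [q_succ_eq_nthPrime_mul_nthPrime hn]
    exact .node 1 (q n) le_rfl (q_pos n) .one ih

theorem matulaLeaves_q {n : ℕ} (hn : 1 ≤ n) : matulaLeaves (q n) = n := by
  induction n, hn using Nat.le_induction with
  | base => exact matulaLeaves_one
  | succ n hn ih =>
    rw [q_succ_eq_nthPrime_mul_nthPrime hn, matulaLeaves_nthPrime_mul_nthPrime le_rfl (q_pos n),
      matulaLeaves_one, ih, add_comm]

theorem MatulaTopological.le_q {m : ℕ} (hm : MatulaTopological m) : m ≤ q (matulaLeaves m) := by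
  induction hm with
  | one => exact q_pos _
  | node n hn hbranches _ ih =>
    have hbranch (p : ℕ) (hp : p ∈ n.primeFactorsList) :
        p ≤ plantedCaterpillar (matulaLeaves (Nat.count Nat.Prime p + 1)) := by
      have hnth := nthPrime_count_add_one (Nat.prime_of_mem_primeFactorsList hp)
      have hle := ih (Nat.count Nat.Prime p + 1) (Nat.le_add_left _ _)
        (hnth.symm ▸ Nat.dvd_of_mem_primeFactorsList hp)
      calc p = nthPrime (Nat.count Nat.Prime p + 1) := hnth.symm
        _ ≤ _ := monotone_nthPrime hle
    calc n = n.primeFactorsList.prod := (Nat.prod_primeFactorsList (by omega)).symm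
      _ ≤ q (matulaLeaves n) := by
        rw [matulaLeaves_eq_sum hn]
        exact prod_le_q_sum (fun _ ↦ matulaLeaves_pos _) hbranches hbranch

/-- For every positive integer `n`: (i) `q n` is the Matula number of a binary tree with
`n` leaves (namely the binary caterpillar `F_n`), and (ii) every topological tree with
`n` leaves has Matula number at most `q n`.  That is, among all topological trees with
`n` leaves, the binary caterpillar `F_n` has the greatest Matula number, and `M(F_n) = q n`. -/
theorem caterpillar_maximizes_matula (n : ℕ) (hn : 1 ≤ n) :
    (MatulaBinary (q n) ∧ matulaLeaves (q n) = n) ∧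
      ∀ m : ℕ, 1 ≤ m → MatulaTopological m → matulaLeaves m = n → m ≤ q n := by
  refine ⟨⟨matulaBinary_q hn, matulaLeaves_q hn⟩, ?_⟩
  rintro m - hm rfl
  exact hm.le_q
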